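/- arXiv:1408.1437 — 3 statements merged into one kernel-verified Lean document; each statement's English description precedes it below -/
import Mathlib

section
/- Let f : ℝ^n → ℝ be Lipschitz continuous and suppose that at Lebesgue-almost every point x ∈ ℝ^n the partial derivatives ∂f/∂x_j (which exist a.e. by Rademacher's theorem) satisfy ∂f/∂x_j(x) ≥ 0 for every j ∈ {1,…,n}. Then f is monotone with respect to the componentwise order: x ≤ y (componentwise) implies f(x) ≤ f(y). -/
/-!
Disintegrate Lebesgue measure along the lines parallel to a coordinate axis. On almost every such
line the derivative of `f` is nonnegative almost everywhere, so the fundamental theorem of calculus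
for absolutely continuous functions shows that `f` increases along it. Since `f` is continuous and
conull sets are dense, `f` then increases along every line parallel to an axis, and two comparable
points are joined by raising the coordinates one at a time.
-/

open MeasureTheory Set

section Order

variable {ι β : Type*} {α : ι → Type*} [DecidableEq ι] [Finite ι] [∀ i, Preorder (α i)]
  [Preorder β] {f : (∀ i, α i) → β}

theorem monotone_of_forall_le_update
    (hf : ∀ x i (a : α i), x i ≤ a → f x ≤ f (Function.update x i a)) : Monotone f := by
  have := Fintype.ofFinite ι
  intro x y hxy
  have le_piecewise (s : Finset ι) : f x ≤ f (s.piecewise y x) := by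
    induction s using Finset.induction_on with
    | empty => rw [Finset.piecewise_empty]
    | insert i s hi ih =>
      rw [Finset.piecewise_insert]
      refine ih.trans (hf _ i (y i) ?_)
      rw [Finset.piecewise_eq_of_notMem _ _ _ hi]
      exact hxy i
  simpa only [Finset.piecewise_univ] using le_piecewise Finset.univ

end Order

theorem le_of_ae_le_of_continuous {X Y : Type*} [TopologicalSpace X] [MeasurableSpace X]
    {μ : Measure X} [μ.IsOpenPosMeasure] [TopologicalSpace Y] [Preorder Y]
    [OrderClosedTopology Y] {f g : X → Y} (hf : Continuous f) (hg : Continuous g)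
    (h : ∀ᵐ x ∂μ, f x ≤ g x) : f ≤ g := fun x ↦ by
  have huniv : {x | f x ≤ g x} = univ :=
    (isClosed_le hf hg).closure_eq.symm.trans (Measure.dense_of_ae h).closure_eq
  exact huniv.symm.subset (mem_univ x)

theorem le_of_absolutelyContinuousOnInterval_of_ae_deriv_nonneg {g : ℝ → ℝ} {a b : ℝ}
    (hab : a ≤ b) (hg : AbsolutelyContinuousOnInterval g a b)
    (hg' : ∀ᵐ t ∂volume.restrict (Icc a b), 0 ≤ deriv g t) : g a ≤ g b := by
  rw [← sub_nonneg, ← hg.integral_deriv_eq_sub]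
  exact intervalIntegral.integral_nonneg_of_ae_restrict hab hg'

theorem deriv_comp_add_smul {𝕜 E F : Type*} [NontriviallyNormedField 𝕜] [AddCommGroup E]
    [Module 𝕜 E] [NormedAddCommGroup F] [NormedSpace 𝕜 F] (f : E → F) (x v : E) (t : 𝕜) :
    deriv (fun s : 𝕜 ↦ f (x + s • v)) t = lineDeriv 𝕜 f (x + t • v) v := by
  simpa only [lineDeriv, add_smul, add_assoc, add_zero] using
    (deriv_comp_const_add (fun s : 𝕜 ↦ f (x + s • v)) t 0).symm

/-- The ACL (absolute continuity on lines) property in the direction `v`: for `μ`-almost every `x`,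
the restriction of `f` to the line through `x` with direction `v` is absolutely continuous on
bounded intervals. Almost every line is encoded by almost every base point. -/
def AbsolutelyContinuousAlong {E : Type*} [AddCommGroup E] [Module ℝ E]
    [MeasurableSpace E] (f : E → ℝ) (v : E) (μ : Measure E) : Prop :=
  ∀ᵐ x ∂μ, ∀ a b : ℝ, AbsolutelyContinuousOnInterval (fun t : ℝ ↦ f (x + t • v)) a b

section Line

variable {E : Type*} [NormedAddCommGroup E] [NormedSpace ℝ E] [MeasurableSpace E]

theorem absolutelyContinuousAlong_of_locallyLipschitz {f : E → ℝ} (hf : LocallyLipschitz f)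
    (v : E) (μ : Measure E) : AbsolutelyContinuousAlong f v μ := by
  refine .of_forall fun x a b ↦ ?_
  have hline : LocallyLipschitz fun t : ℝ ↦ x + t • v :=
    ContDiff.locallyLipschitz (𝕂 := ℝ) (by fun_prop)
  obtain ⟨K, hK⟩ := (hf.comp hline).locallyLipschitzOn.exists_lipschitzOnWith_of_compact
    (isCompact_uIcc (a := a) (b := b))
  exact hK.absolutelyContinuousOnInterval

variable [BorelSpace E] [FiniteDimensional ℝ E] {μ : Measure E} [μ.IsAddHaarMeasure]
  {f : E → ℝ} {v : E}

theorem ae_ae_lineDeriv_add_smul_nonneg (hf : Continuous f)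
    (hv : ∀ᵐ x ∂μ, 0 ≤ lineDeriv ℝ f x v) :
    ∀ᵐ x ∂μ, ∀ᵐ t : ℝ, 0 ≤ lineDeriv ℝ f (x + t • v) v := by
  have hmeas : MeasurableSet {x | 0 ≤ lineDeriv ℝ f x v} :=
    measurableSet_le measurable_const (measurable_lineDeriv hf)
  exact (ae_ae_add_linearMap_mem_iff (LinearMap.toSpanSingleton ℝ E v) volume μ hmeas).2 hv

theorem AbsolutelyContinuousAlong.le_add_smul (hac : AbsolutelyContinuousAlong f v μ)
    (hf : Continuous f) (hv : ∀ᵐ x ∂μ, 0 ≤ lineDeriv ℝ f x v) {s : ℝ} (hs : 0 ≤ s) (x : E) :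
    f x ≤ f (x + s • v) := by
  refine le_of_ae_le_of_continuous (μ := μ) (g := fun x ↦ f (x + s • v)) hf (by fun_prop) ?_ x
  filter_upwards [hac, ae_ae_lineDeriv_add_smul_nonneg hf hv] with p hp hp'
  have hderiv : ∀ᵐ t ∂volume.restrict (Icc 0 s), 0 ≤ deriv (fun t : ℝ ↦ f (p + t • v)) t := by
    simpa only [deriv_comp_add_smul] using ae_restrict_of_ae hp'
  simpa only [zero_smul, add_zero] using
    le_of_absolutelyContinuousOnInterval_of_ae_deriv_nonneg hs (hp 0 s) hderiv

end Line

theorem lipschitz_partialDeriv_ae_nonneg_monotone_general {ι : Type*} [Fintype ι] [DecidableEq ι]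
    {f : (ι → ℝ) → ℝ} (hf : Continuous f)
    (hac : ∀ i, AbsolutelyContinuousAlong f (Pi.single i 1) volume)
    (hae : ∀ᵐ x, ∀ i, LineDifferentiableAt ℝ f x (Pi.single i 1) →
      0 ≤ lineDeriv ℝ f x (Pi.single i 1)) :
    Monotone f := by
  refine monotone_of_forall_le_update fun x i a ha ↦ ?_
  have hi : ∀ᵐ x, 0 ≤ lineDeriv ℝ f x (Pi.single i 1) := by
    filter_upwards [hae] with x hx
    by_cases hd : LineDifferentiableAt ℝ f x (Pi.single i 1)
    · exact hx i hd
    · exact (lineDeriv_zero_of_not_lineDifferentiableAt hd).ge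
  have hupdate : Function.update x i a = x + (a - x i) • Pi.single i 1 := by
    ext j
    obtain rfl | hj := eq_or_ne j i <;> simp [*]
  rw [hupdate]
  exact (hac i).le_add_smul hf hi (sub_nonneg.2 ha) x

/-- A Lipschitz function `f : ℝⁿ → ℝ` whose partial derivatives
(which exist a.e. by Rademacher's theorem) are nonnegative at Lebesgue-almost every
point where they exist is monotone with respect to the componentwise order. -/
theorem lipschitz_partialDeriv_ae_nonneg_monotone (n : ℕ)
    (f : (Fin n → ℝ) → ℝ) (K : NNReal) (hf : LipschitzWith K f)
    (hae : ∀ᵐ x ∂(MeasureTheory.volume : MeasureTheory.Measure (Fin n → ℝ)),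
      ∀ j : Fin n, LineDifferentiableAt ℝ f x (Pi.single j 1) →
        0 ≤ lineDeriv ℝ f x (Pi.single j 1)) :
    Monotone f :=
  lipschitz_partialDeriv_ae_nonneg_monotone_general hf.continuous
    (fun _ ↦ absolutelyContinuousAlong_of_locallyLipschitz hf.locallyLipschitz _ _) hae
end

section
/- Under Assumption 1, fix a signal input s and a link l. Then for any fixed values of all other state coordinates x_m ∈ [0, x^cap_m] (m ≠ l) and any fixed d_l ≥ 0, the map x_l ↦ F_l(x, s, d) is nondecreasing on [0, x^cap_l]. -/
open Finset
open scoped Classical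

/-- Outflow `f^out_l(x, s)` of link `l` under signal `s`. -/
noncomputable def fout {L : Type*} [Fintype L]
    (c xcap : L → ℝ) (β α : L → L → ℝ) (s : Finset L)
    (x : L → ℝ) (l : L) : ℝ :=
  if l ∈ s then
    (Finset.univ.filter fun k => 0 < β l k).fold min (min (x l) (c l))
      fun k => α l k / β l k * (xcap k - x k)
  else 0

/-- Queue update `F_l(x, s, d)`, with `L^up_l = {j : η j = τ l}`. -/
noncomputable def Fupd {L V : Type*} [Fintype L]
    (η : L → V) (τ : L → Option V)
    (c xcap : L → ℝ) (β α : L → L → ℝ) (s : Finset L)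
    (x d : L → ℝ) (l : L) : ℝ :=
  min (xcap l)
    (x l - fout c xcap β α s x l
      + ∑ j ∈ Finset.univ.filter (fun j => τ l = some (η j)), β j l * fout c xcap β α s x j
      + d l)

/-!
Split the queue `t` of link `l` as `min t (c l) + max t (c l) - c l`. The outflow of `l` grows no
faster than `min t (c l)`. Assumption 1 says that while `t ≤ c l` the supply of `l` binds no
upstream link `j`, so the flow from `j` into `l` falls no faster than `α j l * max t (c l)` grows.
The supply ratios of the actuated links add up to at most `1`, so each part of an increment of `t`
covers the loss it causes.
-/

theorem monotone_min_sub_min {G : Type*} [AddCommGroup G] [LinearOrder G] [IsOrderedAddMonoid G]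
    {r c : G} (hrc : r ≤ c) : Monotone fun t => min t c - min t r := by
  have clipped (t : G) : min t c - min t r = max 0 (min t c - r) := by
    calc min t c - min t r
      _ = min t c - min (min t c) r := by rw [min_assoc, min_eq_right hrc]
      _ = max 0 (min t c - r) := by rw [← max_sub_sub_left, sub_self]
  simp only [clipped]
  intro t u htu
  dsimp only
  gcongr

theorem monotone_mul_max_add_mul_min {K : Type*} [Field K] [LinearOrder K] [IsStrictOrderedRing K]
    {a b c m y : K} (ha : 0 < a) (hb : 0 < b) (hy : y ≤ a / b * (m - c)) :
    Monotone fun t => a * max t c + b * min y (a / b * (m - t)) := by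
  have scaled (t : K) : b * (a / b * (m - t)) = a * (m - t) := by field_simp
  have unclipped (t : K) :
      a * max t c + b * min y (a / b * (m - t)) = min (a * max t c + b * y) (a * m) := by
    have hby : b * y ≤ a * (m - c) := (mul_le_mul_of_nonneg_left hy hb.le).trans_eq (scaled c)
    rw [mul_min_of_nonneg _ _ hb.le, scaled]
    rcases le_total t c with htc | hct
    · have : a * (m - c) ≤ a * (m - t) := by gcongr
      rw [max_eq_right htc, min_eq_left (hby.trans this), min_eq_left (by linarith)]
    · rw [max_eq_left hct, ← min_add_add_left]
      ring_nf
  simp only [unclipped]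
  intro t u htu
  dsimp only
  gcongr

theorem sum_le_one_of_nonempty_imp {ι R : Type*} [AddCommMonoidWithOne R] [Preorder R]
    [ZeroLEOneClass R] {T : Finset ι} {f : ι → R}
    (h : T.Nonempty → ∑ i ∈ T, f i = 1) : ∑ i ∈ T, f i ≤ 1 := by
  rcases T.eq_empty_or_nonempty with rfl | hT
  · simp only [sum_empty, zero_le_one]
  · exact (h hT).le

section Traffic

variable {L V : Type*} {η : L → V} {τ : L → Option V} {c xcap : L → ℝ} {β α : L → L → ℝ}
  {s : Finset L} {j l : L}

theorem turnRatio_self_eq_zero (hself : some (η l) ≠ τ l) (hβ : 0 ≤ β l l)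
    (hβsupp : 0 < β l l → τ l = some (η l)) : β l l = 0 :=
  (not_lt.1 fun h => hself (hβsupp h).symm).antisymm hβ

variable [Fintype L]

theorem fout_of_notMem (x : L → ℝ) (hl : l ∉ s) : fout c xcap β α s x l = 0 :=
  if_neg hl

theorem exists_fout_update_self_eq_min (x : L → ℝ) (hl : l ∈ s) (hβ : β l l ≤ 0) :
    ∃ r ≤ c l, ∀ t, fout c xcap β α s (Function.update x l t) l = min t r := by
  let downstream := univ.filter fun k => 0 < β l k
  refine ⟨downstream.fold min (c l) fun k => α l k / β l k * (xcap k - x k),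
    ((le_fold_min _).1 le_rfl).1, fun t => ?_⟩
  have supplies_unchanged : ∀ k ∈ downstream,
      α l k / β l k * (xcap k - Function.update x l t k) = α l k / β l k * (xcap k - x k) := by
    intro k hk
    have hkl : k ≠ l := by
      rintro rfl
      exact hβ.not_gt (mem_filter.1 hk).2
    rw [Function.update_of_ne hkl]
  rw [fout, if_pos hl, fold_congr supplies_unchanged, Function.update_self]
  exact eq_of_forall_le_iff fun y => by simp only [le_fold_min, le_min_iff, and_assoc]

theorem exists_fout_update_eq_min (x : L → ℝ) (hj : j ∈ s) (hjl : j ≠ l) (hβ : 0 < β j l) :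
    ∃ y ≤ c j, ∀ t, fout c xcap β α s (Function.update x l t) j =
      min y (α j l / β j l * (xcap l - t)) := by
  let others := (univ.filter fun k => 0 < β j k).erase l
  refine ⟨others.fold min (min (x j) (c j)) fun k => α j k / β j k * (xcap k - x k),
    ((le_fold_min _).1 le_rfl).1.trans (min_le_right _ _), fun t => ?_⟩
  have others_unchanged : ∀ k ∈ others,
      α j k / β j k * (xcap k - Function.update x l t k) = α j k / β j k * (xcap k - x k) :=
    fun k hk => by rw [Function.update_of_ne (ne_of_mem_erase hk)]
  have hl : l ∈ univ.filter fun k => 0 < β j k := mem_filter.2 ⟨mem_univ l, hβ⟩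
  rw [fout, if_pos hj, ← insert_erase hl, fold_insert (notMem_erase l _),
    fold_congr others_unchanged, Function.update_self, Function.update_of_ne hjl, min_comm]

theorem monotone_min_sub_fout_update_self (x : L → ℝ) (hβ : β l l ≤ 0) :
    Monotone fun t => min t (c l) - fout c xcap β α s (Function.update x l t) l := by
  by_cases hl : l ∈ s
  · obtain ⟨r, hr, hfout⟩ := exists_fout_update_self_eq_min (c := c) (xcap := xcap) (α := α) x hl hβ
    simpa only [hfout] using monotone_min_sub_min hr
  · simp only [fout_of_notMem _ hl, sub_zero]
    exact monotone_id.min monotone_const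

theorem monotone_mul_max_add_mul_fout_update (x : L → ℝ) (hj : j ∈ s) (hβ : 0 ≤ β j l)
    (hβl : β l l = 0) (hα : 0 < α j l)
    (hA1 : 0 < β j l → c l ≤ xcap l - β j l / α j l * c j) :
    Monotone fun t =>
      α j l * max t (c l) + β j l * fout c xcap β α s (Function.update x l t) j := by
  rcases hβ.eq_or_lt with hβ0 | hβpos
  · simp only [← hβ0, zero_mul, add_zero]
    exact (monotone_id.max monotone_const).const_mul hα.le
  · have hjl : j ≠ l := by
      rintro rfl
      exact hβpos.ne' hβl
    obtain ⟨y, hy, hfout⟩ :=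
      exists_fout_update_eq_min (c := c) (xcap := xcap) (α := α) x hj hjl hβpos
    have supply_not_binding : c j ≤ α j l / β j l * (xcap l - c l) := by
      rw [← div_le_iff₀' (div_pos hα hβpos), div_eq_inv_mul, inv_div]
      linarith [hA1 hβpos]
    simpa only [hfout] using monotone_mul_max_add_mul_min hα hβpos (hy.trans supply_not_binding)

theorem sum_upstream_mul_fout_eq_sum_actuated (x : L → ℝ) :
    ∑ j ∈ univ.filter (fun j => τ l = some (η j)), β j l * fout c xcap β α s x j =
      ∑ j ∈ univ.filter (fun j => j ∈ s ∧ some (η j) = τ l), β j l * fout c xcap β α s x j := by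
  refine (sum_subset (fun j hj => ?_) fun j hj hj' => ?_).symm
  · simpa only [mem_filter_univ, eq_comm] using ((mem_filter_univ j).1 hj).2
  · simp only [mem_filter_univ] at hj hj'
    rw [fout_of_notMem x fun hjs => hj' ⟨hjs, hj.symm⟩, mul_zero]

theorem Fupd_monotone_in_self_general (hβ : ∀ j, 0 ≤ β j l) (hβl : β l l = 0)
    (hα : ∀ j, 0 < α j l)
    (hαsum : ∑ j ∈ univ.filter (fun j => j ∈ s ∧ some (η j) = τ l), α j l ≤ 1)
    (hA1 : ∀ j, τ l = some (η j) → 0 < β j l → c l ≤ xcap l - β j l / α j l * c j)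
    (x d : L → ℝ) :
    Monotone fun t => Fupd η τ c xcap β α s (Function.update x l t) d l := by
  set up := univ.filter fun j => j ∈ s ∧ some (η j) = τ l
  have own := monotone_min_sub_fout_update_self (c := c) (xcap := xcap) (α := α) (s := s) x hβl.le
  have inflow : Monotone fun t => ∑ j ∈ up,
      (α j l * max t (c l) + β j l * fout c xcap β α s (Function.update x l t) j) := by
    refine fun p q hpq => sum_le_sum fun j hj => ?_
    obtain ⟨hjs, hjτ⟩ := (mem_filter_univ j).1 hj
    exact monotone_mul_max_add_mul_fout_update x hjs (hβ j) hβl (hα j) (hA1 j hjτ.symm) hpq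
  have slack : Monotone fun t => (1 - ∑ j ∈ up, α j l) * max t (c l) :=
    (monotone_id.max monotone_const).const_mul (sub_nonneg.2 hαsum)
  intro p q hpq
  simp only [Fupd, sum_upstream_mul_fout_eq_sum_actuated, Function.update_self]
  refine min_le_min_left _ ?_
  have total := add_le_add (add_le_add (own hpq) (inflow hpq)) (slack hpq)
  simp only [sum_add_distrib, ← sum_mul] at total
  linarith [min_add_max p (c l), min_add_max q (c l)]

end Traffic

/-- Under Assumption 1, for a fixed signal `s` and link `l`, with all
other coordinates fixed in their capacity ranges and `d l ≥ 0`, the map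
`x l ↦ F_l(x, s, d)` is nondecreasing on `[0, xcap l]`. -/
theorem Fupd_monotone_in_self {L V : Type*} [Fintype L]
    (η : L → V) (τ : L → Option V) (hself : ∀ l, some (η l) ≠ τ l)
    (c xcap : L → ℝ) (hc : ∀ l, 0 < c l) (hcap : ∀ l, 0 < xcap l)
    (β : L → L → ℝ) (hβ : ∀ l k, 0 ≤ β l k)
    (hβsupp : ∀ l k, 0 < β l k → τ k = some (η l))
    (hβsum : ∀ l, ∑ k ∈ Finset.univ.filter (fun k => τ k = some (η l)), β l k ≤ 1)
    (s : Finset L) (α : L → L → ℝ) (hα : ∀ l k, 0 < α l k)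
    (hαsum : ∀ k, (Finset.univ.filter fun j => j ∈ s ∧ some (η j) = τ k).Nonempty →
      ∑ j ∈ Finset.univ.filter (fun j => j ∈ s ∧ some (η j) = τ k), α j k = 1)
    (hA1 : ∀ l k, τ l = some (η k) → 0 < β k l → c l ≤ xcap l - β k l / α k l * c k)
    (l : L)
    (x d : L → ℝ) (hx : ∀ m, m ≠ l → 0 ≤ x m ∧ x m ≤ xcap m) (hd : 0 ≤ d l) :
    ∀ p q : ℝ, 0 ≤ p → p ≤ q → q ≤ xcap l →
      Fupd η τ c xcap β α s (Function.update x l p) d l ≤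
        Fupd η τ c xcap β α s (Function.update x l q) d l :=
  fun _ _ _ hpq _ => Fupd_monotone_in_self_general (hβ · l)
    (turnRatio_self_eq_zero (hself l) (hβ l l) (hβsupp l l)) (hα · l)
    (sum_le_one_of_nonempty_imp (hαsum l)) (hA1 l) x d hpq
end

section
/- Fix a signal input s, a link l, and a link k ∈ L^adj_l. Then for any fixed values of all other state coordinates x_m ∈ [0, x^cap_m] (m ≠ k) and any fixed d_l ≥ 0, the map x_k ↦ F_l(x, s, d) is nonincreasing on [0, x^cap_k]. -/
open Finset
open scoped Classical

/-!
Raising `x k` only shrinks the space left on `k`, so it can only throttle links that feed `k`. The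
links feeding `l` may be among these, but neither `l` itself nor the queue `x l` is affected: `k`
starts where `l` starts, and no link ends where it starts. So the inflow of `l` falls while its
outflow stays the same.
-/

section Outflow

variable {L : Type*} [Fintype L] {c xcap : L → ℝ} {β α : L → L → ℝ} {s : Finset L}
  {x y : L → ℝ} {k l : L}

theorem le_fout_iff (hl : l ∈ s) {a : ℝ} :
    a ≤ fout c xcap β α s x l ↔
      (a ≤ x l ∧ a ≤ c l) ∧ ∀ m, 0 < β l m → a ≤ α l m / β l m * (xcap m - x m) := by
  simp [fout, hl, Finset.le_fold_min]

theorem fout_le_fout (hα : ∀ m, 0 ≤ α l m) (hown : x l ≤ y l)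
    (hdown : ∀ m, 0 < β l m → y m ≤ x m) :
    fout c xcap β α s x l ≤ fout c xcap β α s y l := by
  by_cases hl : l ∈ s
  · obtain ⟨⟨hqueue, hsat⟩, hsupply⟩ := (le_fout_iff hl).1 (le_refl (fout c xcap β α s x l))
    refine (le_fout_iff hl).2 ⟨⟨hqueue.trans hown, hsat⟩, fun m hm => ?_⟩
    calc fout c xcap β α s x l
        ≤ α l m / β l m * (xcap m - x m) := hsupply m hm
      _ ≤ α l m / β l m * (xcap m - y m) :=
          mul_le_mul_of_nonneg_left (sub_le_sub_left (hdown m hm) _) (div_nonneg (hα m) hm.le)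
  · simp [fout, hl]

theorem fout_congr (hown : x l = y l) (hdown : ∀ m, 0 < β l m → x m = y m) :
    fout c xcap β α s x l = fout c xcap β α s y l := by
  unfold fout
  rw [hown]
  congr 1
  exact Finset.fold_congr fun m hm => by rw [hdown m (Finset.mem_filter.1 hm).2]

theorem antitone_fout_update (hα : ∀ m, 0 ≤ α l m) (hkl : k ≠ l) :
    Antitone fun t => fout c xcap β α s (Function.update x k t) l := fun p q hpq =>
  fout_le_fout hα (by simp only [Function.update_of_ne hkl.symm, le_refl])
    fun m _ => Function.update_mono hpq m

theorem fout_update_of_not_pos (hkl : k ≠ l) (hβ : ¬0 < β l k) (t : ℝ) :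
    fout c xcap β α s (Function.update x k t) l = fout c xcap β α s x l :=
  fout_congr (Function.update_of_ne hkl.symm t x) fun _ hm =>
    Function.update_of_ne (by rintro rfl; exact hβ hm) t x

end Outflow

theorem Fupd_le_Fupd {L V : Type*} [Fintype L] {η : L → V} {τ : L → Option V}
    {c xcap : L → ℝ} {β α : L → L → ℝ} {s : Finset L} {x y d : L → ℝ} {l : L}
    (hβ : ∀ j, 0 ≤ β j l)
    (hremain : x l - fout c xcap β α s x l ≤ y l - fout c xcap β α s y l)
    (hup : ∀ j, τ l = some (η j) → fout c xcap β α s x j ≤ fout c xcap β α s y j) :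
    Fupd η τ c xcap β α s x d l ≤ Fupd η τ c xcap β α s y d l := by
  unfold Fupd
  have hinflow : ∑ j with τ l = some (η j), β j l * fout c xcap β α s x j ≤
      ∑ j with τ l = some (η j), β j l * fout c xcap β α s y j :=
    Finset.sum_le_sum fun j hj =>
      mul_le_mul_of_nonneg_left (hup j (Finset.mem_filter.1 hj).2) (hβ j)
  gcongr min _ (?_ + ?_ + _)

theorem Fupd_antitone_in_adjacent_general {L V : Type*} [Fintype L]
    {η : L → V} {τ : L → Option V} (hself : ∀ l, some (η l) ≠ τ l)
    {c xcap : L → ℝ} {β : L → L → ℝ} (hβ : ∀ l k, 0 ≤ β l k)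
    (hβsupp : ∀ l k, 0 < β l k → τ k = some (η l))
    {s : Finset L} {α : L → L → ℝ} (hα : ∀ l k, 0 ≤ α l k)
    {l k : L} (hkl : k ≠ l) (hadj : τ k = τ l) (x d : L → ℝ) :
    Antitone fun t => Fupd η τ c xcap β α s (Function.update x k t) d l := by
  intro p q hpq
  have not_downstream : ¬0 < β l k := fun h => hself l ((hβsupp l k h).symm.trans hadj)
  have not_upstream : ∀ j, τ l = some (η j) → k ≠ j := by
    rintro _ hj rfl
    exact hself k (hj.symm.trans hadj.symm)
  refine Fupd_le_Fupd (fun j => hβ j l) ?_ fun j hj =>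
    antitone_fout_update (hα j) (not_upstream j hj) hpq
  simp only [fout_update_of_not_pos hkl not_downstream, Function.update_of_ne hkl.symm, le_refl]

/-- For a fixed signal `s`, link `l`, and adjacent link `k ∈ L^adj_l`
(i.e. `k ≠ l` and `τ k = τ l`), with all other coordinates fixed in their capacity
ranges and `d l ≥ 0`, the map `x k ↦ F_l(x, s, d)` is nonincreasing on `[0, xcap k]`. -/
theorem Fupd_antitone_in_adjacent {L V : Type*} [Fintype L]
    (η : L → V) (τ : L → Option V) (hself : ∀ l, some (η l) ≠ τ l)
    (c xcap : L → ℝ) (hc : ∀ l, 0 < c l) (hcap : ∀ l, 0 < xcap l)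
    (β : L → L → ℝ) (hβ : ∀ l k, 0 ≤ β l k)
    (hβsupp : ∀ l k, 0 < β l k → τ k = some (η l))
    (hβsum : ∀ l, ∑ k ∈ Finset.univ.filter (fun k => τ k = some (η l)), β l k ≤ 1)
    (s : Finset L) (α : L → L → ℝ) (hα : ∀ l k, 0 < α l k)
    (hαsum : ∀ k, (Finset.univ.filter fun j => j ∈ s ∧ some (η j) = τ k).Nonempty →
      ∑ j ∈ Finset.univ.filter (fun j => j ∈ s ∧ some (η j) = τ k), α j k = 1)
    (l k : L) (hkl : k ≠ l) (hadj : τ k = τ l)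
    (x d : L → ℝ) (hx : ∀ m, m ≠ k → 0 ≤ x m ∧ x m ≤ xcap m) (hd : 0 ≤ d l) :
    ∀ p q : ℝ, 0 ≤ p → p ≤ q → q ≤ xcap k →
      Fupd η τ c xcap β α s (Function.update x k q) d l ≤
        Fupd η τ c xcap β α s (Function.update x k p) d l := by
  intro p q _ hpq _
  exact Fupd_antitone_in_adjacent_general hself hβ hβsupp (fun i j => (hα i j).le) hkl hadj x d hpq
end
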